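/- (Example Erock: the limit distribution depends on the unrestricted player's strategy.) One has E[(max(0, Z_2 − Z_1, Z_3 − Z_1))³] > E[(W + max(Z_1, Z_2, Z_3))³]. In particular, the random variables −Z_1 + max(Z_1,Z_2,Z_3) = max(0, Z_2 − Z_1, Z_3 − Z_1) and W + max(Z_1,Z_2,Z_3) have different distributions, even though −Z_1 and W have the same distribution N(0,2). -/

import Mathlib

open MeasureTheory ProbabilityTheory Real Filter
open scoped ENNReal Topology

/-- Cramér–Wold for triples of real random variables. -/
lemma triple_map_eq {Ω : Type*} [MeasurableSpace Ω] (P : Measure Ω) [IsProbabilityMeasure P]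
    {X Y Z X' Y' Z' : Ω → ℝ} (hX : Measurable X) (hY : Measurable Y) (hZ : Measurable Z)
    (hX' : Measurable X') (hY' : Measurable Y') (hZ' : Measurable Z')
    (h : ∀ a b c : ℝ, P.map (fun ω => a * X ω + b * Y ω + c * Z ω)
      = P.map (fun ω => a * X' ω + b * Y' ω + c * Z' ω)) :
    P.map (fun ω => (X ω, Y ω, Z ω)) = P.map (fun ω => (X' ω, Y' ω, Z' ω)) := by
  have h1 : Measurable (fun ω => (X ω, Y ω, Z ω)) := by fun_prop
  have h2 : Measurable (fun ω => (X' ω, Y' ω, Z' ω)) := by fun_prop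
  have := Measure.isProbabilityMeasure_map (μ := P) h1.aemeasurable
  have := Measure.isProbabilityMeasure_map (μ := P) h2.aemeasurable
  apply Measure.ext_of_charFunDual
  ext L
  have hL : ∀ x y z : ℝ, L (x, y, z) = L (1, 0, 0) * x + L (0, 1, 0) * y + L (0, 0, 1) * z := by
    intro x y z
    have : ((x, y, z) : ℝ × ℝ × ℝ)
        = x • ((1, 0, 0) : ℝ × ℝ × ℝ) + y • ((0, 1, 0) : ℝ × ℝ × ℝ)
          + z • ((0, 0, 1) : ℝ × ℝ × ℝ) := by
      simp
    rw [this, map_add, map_add, map_smul, map_smul, map_smul]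
    simp only [smul_eq_mul]
    ring
  rw [charFunDual_eq_charFun_map_one, charFunDual_eq_charFun_map_one,
    Measure.map_map (by fun_prop) h1, Measure.map_map (by fun_prop) h2]
  have e1 : (L ∘ fun ω => (X ω, Y ω, Z ω))
      = fun ω => L (1, 0, 0) * X ω + L (0, 1, 0) * Y ω + L (0, 0, 1) * Z ω := by
    ext ω; exact hL _ _ _
  have e2 : (L ∘ fun ω => (X' ω, Y' ω, Z' ω))
      = fun ω => L (1, 0, 0) * X' ω + L (0, 1, 0) * Y' ω + L (0, 0, 1) * Z' ω := by
    ext ω; exact hL _ _ _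
  rw [e1, e2, h]

lemma int_add {Ω : Type*} [MeasurableSpace Ω] {P : Measure Ω} {f g : Ω → ℝ}
    (hf : Integrable f P) (hg : Integrable g P) : Integrable (fun ω => f ω + g ω) P := hf.add hg

lemma int_sub {Ω : Type*} [MeasurableSpace Ω] {P : Measure Ω} {f g : Ω → ℝ}
    (hf : Integrable f P) (hg : Integrable g P) : Integrable (fun ω => f ω - g ω) P := hf.sub hg

lemma integrable_mul3 {Ω : Type*} [MeasurableSpace Ω] {P : Measure Ω} [IsProbabilityMeasure P]
    {f g h : Ω → ℝ} (hf : MemLp f 3 P) (hg : MemLp g 3 P) (hh : MemLp h 3 P) :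
    Integrable (fun ω => f ω * g ω * h ω) P := by
  have i : ∀ {u : Ω → ℝ}, MemLp u 3 P → Integrable (fun ω => |u ω| ^ 3) P := by
    intro u hu
    have := hu.integrable_norm_pow (by norm_num)
    simpa using this
  refine Integrable.mono' (((i hf).add (i hg)).add (i hh))
    ((hf.1.mul hg.1).mul hh.1) (ae_of_all _ fun ω => ?_)
  simp only [Pi.add_apply, norm_mul, Real.norm_eq_abs]
  have key : ∀ a b c : ℝ, 0 ≤ a → 0 ≤ b → 0 ≤ c → a * b * c ≤ a ^ 3 + b ^ 3 + c ^ 3 := by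
    intro a b c ha hb hc
    have : a * b * c * 3 ≤ a ^ 3 + b ^ 3 + c ^ 3 := by
      nlinarith [mul_nonneg (add_nonneg (add_nonneg ha hb) hc) (add_nonneg (add_nonneg
        (sq_nonneg (a - b)) (sq_nonneg (b - c))) (sq_nonneg (a - c)))]
    have := mul_nonneg (mul_nonneg ha hb) hc
    linarith
  exact key _ _ _ (abs_nonneg _) (abs_nonneg _) (abs_nonneg _)

/-- moments of a centred real Gaussian variable -/
lemma gauss_facts {Ω : Type*} [MeasurableSpace Ω] {P : Measure Ω}
    {X : Ω → ℝ} (hX : Measurable X) {v : NNReal} (h : P.map X = gaussianReal 0 v) :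
    MemLp X 3 P ∧ ∫ ω, X ω ∂P = 0 ∧ ∫ ω, X ω ^ 2 ∂P = v ∧ ∫ ω, X ω ^ 3 ∂P = 0 := by
  have tr : ∀ n : ℕ, ∫ ω, X ω ^ n ∂P = ∫ x, x ^ n ∂(gaussianReal 0 v) := by
    intro n
    rw [← h, integral_map hX.aemeasurable (by fun_prop)]
  refine ⟨?_, ?_, ?_, ?_⟩
  · have := memLp_id_gaussianReal' (μ := 0) (v := v) 3 (by norm_num)
    rw [← h, memLp_map_measure_iff (by fun_prop) hX.aemeasurable] at this
    exact this
  · have := tr 1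
    simp only [pow_one] at this
    rw [this, integral_id_gaussianReal]
  · rw [tr 2]
    have := variance_fun_id_gaussianReal (μ := 0) (v := v)
    rw [variance_eq_integral (by fun_prop)] at this
    simpa using this
  · rw [tr 3]
    have h1 : ∫ x, x ^ 3 ∂(gaussianReal 0 v) = ∫ x, (-x) ^ 3 ∂(gaussianReal 0 v) := by
      conv_lhs => rw [show gaussianReal 0 v = (gaussianReal 0 v).map (fun x ↦ -x) by
        rw [gaussianReal_map_neg, neg_zero]]
      rw [integral_map (by fun_prop) (by fun_prop)]
    have h2 : ∀ x : ℝ, (-x) ^ 3 = - x ^ 3 := fun x => by ring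
    simp only [h2, integral_neg] at h1
    linarith

lemma abs_cube_gt {Ω : Type*} [MeasurableSpace Ω] {P : Measure Ω} [IsProbabilityMeasure P]
    {X : Ω → ℝ} (hX : Measurable X) (h : P.map X = gaussianReal 0 6) :
    6 * ∫ ω, |X ω| ∂P < ∫ ω, |X ω| ^ 3 ∂P := by
  obtain ⟨m, -, h2, -⟩ := gauss_facts hX h
  have i3 : Integrable (fun ω => |X ω| ^ 3) P := by
    simpa using m.integrable_norm_pow (by norm_num)
  have i2 : Integrable (fun ω => X ω ^ 2) P :=
    (m.mono_exponent (by norm_num : (2 : ℝ≥0∞) ≤ 3)).integrable_sq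
  have i1 : Integrable (fun ω => |X ω|) P := (m.integrable (by norm_num)).abs
  set s := √6 with hs
  have hs2 : s ^ 2 = 6 := Real.sq_sqrt (by norm_num)
  have hs0 : 0 < s := Real.sqrt_pos.2 (by norm_num)
  have e : ∀ ω, (|X ω| - s) ^ 2 * (|X ω| + s)
      = |X ω| ^ 3 - s * X ω ^ 2 - 6 * |X ω| + 6 * s := by
    intro ω
    rw [← sq_abs (X ω), ← hs2]; ring
  have iI : Integrable (fun ω => (|X ω| - s) ^ 2 * (|X ω| + s)) P := by
    simp only [e]
    exact ((i3.sub (i2.const_mul _)).sub (i1.const_mul _)).add (integrable_const _)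
  have eI : ∫ ω, (|X ω| - s) ^ 2 * (|X ω| + s) ∂P
      = ∫ ω, |X ω| ^ 3 ∂P - 6 * ∫ ω, |X ω| ∂P := by
    simp only [e]
    rw [integral_add (int_sub (int_sub i3 (i2.const_mul _)) (i1.const_mul _)) (integrable_const _),
      integral_sub (int_sub i3 (i2.const_mul _)) (i1.const_mul _), integral_sub i3 (i2.const_mul _),
      integral_const_mul, integral_const_mul, h2]
    simp; ring
  have nn : 0 ≤ fun ω => (|X ω| - s) ^ 2 * (|X ω| + s) := fun ω => by
    have := abs_nonneg (X ω)
    simp only [Pi.zero_apply]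
    positivity
  have hne : ∫ ω, (|X ω| - s) ^ 2 * (|X ω| + s) ∂P ≠ 0 := by
    intro h0
    rw [integral_eq_zero_iff_of_nonneg nn iI] at h0
    have := nullSingletonClass_gaussianReal (μ := 0) (v := 6) (by norm_num)
    have hn : gaussianReal 0 6 ({s, -s} : Set ℝ) = 0 :=
      (Set.toFinite _).measure_zero _
    rw [← h, Measure.map_apply hX (Set.toFinite _).measurableSet] at hn
    have hall : P Set.univ ≤ 0 := by
      rw [← hn]
      apply measure_mono_ae
      filter_upwards [h0] with ω hω _
      have h3 := abs_nonneg (X ω)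
      simp only [Pi.zero_apply, mul_eq_zero] at hω
      have : |X ω| = s := by
        rcases hω with hω | hω
        · have := pow_eq_zero_iff (two_ne_zero) |>.1 hω
          linarith
        · linarith
      change X ω ∈ ({s, -s} : Set ℝ)
      rcases (abs_eq hs0.le).1 this with h | h <;> simp [h]
    simp at hall
  have := lt_of_le_of_ne (integral_nonneg nn) (Ne.symm hne)
  linarith

lemma max_range_eq (x y z : ℝ) : 2 * (max x (max y z) + max (-x) (max (-y) (-z)))
    = |x - y| + |z - y| + |z - x| := by
  simp only [max_def, abs_eq_max_neg]
  split_ifs <;> linarith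

set_option maxHeartbeats 1000000 in
/-- Example Erock: `E[(max(0, Z₂−Z₁, Z₃−Z₁))³] > E[(W + max(Z₁,Z₂,Z₃))³]`;
in particular `max(0, Z₂−Z₁, Z₃−Z₁) = −Z₁ + max(Z₁,Z₂,Z₃)` and `W + max(Z₁,Z₂,Z₃)` have
different distributions.  Here `W ∼ N(0,2)` is independent of the centered Gaussian vector
`(Z₁,Z₂,Z₃)` with covariance matrix `[[2,−1,−1],[−1,2,−1],[−1,−1,2]]`. -/
theorem erock_third_moment_gt
    {Ω : Type*} [MeasurableSpace Ω] (P : Measure Ω) [IsProbabilityMeasure P]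
    (W Z1 Z2 Z3 : Ω → ℝ)
    (hWm : Measurable W) (hZ1 : Measurable Z1) (hZ2 : Measurable Z2) (hZ3 : Measurable Z3)
    (hW : P.map W = gaussianReal 0 2)
    (hZ : ∀ a b c : ℝ, P.map (fun ω => a * Z1 ω + b * Z2 ω + c * Z3 ω)
        = gaussianReal 0 (Real.toNNReal
            (2 * (a ^ 2 + b ^ 2 + c ^ 2) - 2 * (a * b + a * c + b * c))))
    (hindep : IndepFun W (fun ω => (Z1 ω, Z2 ω, Z3 ω)) P) :
    (∫ ω, (max 0 (max (Z2 ω - Z1 ω) (Z3 ω - Z1 ω))) ^ 3 ∂P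
        > ∫ ω, (W ω + max (Z1 ω) (max (Z2 ω) (Z3 ω))) ^ 3 ∂P) ∧
    P.map (fun ω => max 0 (max (Z2 ω - Z1 ω) (Z3 ω - Z1 ω)))
      ≠ P.map (fun ω => W ω + max (Z1 ω) (max (Z2 ω) (Z3 ω))) := by
  suffices hmain : ∫ ω, (max 0 (max (Z2 ω - Z1 ω) (Z3 ω - Z1 ω))) ^ 3 ∂P
        > ∫ ω, (W ω + max (Z1 ω) (max (Z2 ω) (Z3 ω))) ^ 3 ∂P by
    refine ⟨hmain, fun heq => ?_⟩
    have h1 : ∫ ω, (max 0 (max (Z2 ω - Z1 ω) (Z3 ω - Z1 ω))) ^ 3 ∂P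
        = ∫ x, x ^ 3 ∂(P.map (fun ω => max 0 (max (Z2 ω - Z1 ω) (Z3 ω - Z1 ω)))) := by
      rw [integral_map (by fun_prop) (by fun_prop)]
    have h2 : ∫ ω, (W ω + max (Z1 ω) (max (Z2 ω) (Z3 ω))) ^ 3 ∂P
        = ∫ x, x ^ 3 ∂(P.map (fun ω => W ω + max (Z1 ω) (max (Z2 ω) (Z3 ω)))) := by
      rw [integral_map (by fun_prop) (by fun_prop)]
    rw [h1, h2, heq] at hmain
    exact lt_irrefl _ hmain
  -- marginal laws
  have l1 : P.map Z1 = gaussianReal 0 2 := by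
    have := hZ 1 0 0; norm_num at this; exact this
  have l2 : P.map Z2 = gaussianReal 0 2 := by
    have := hZ 0 1 0; norm_num at this; exact this
  have l3 : P.map Z3 = gaussianReal 0 2 := by
    have := hZ 0 0 1; norm_num at this; exact this
  have lD : P.map (fun ω => Z1 ω - Z2 ω) = gaussianReal 0 6 := by
    have := hZ 1 (-1) 0; norm_num at this
    simpa [sub_eq_add_neg] using this
  have hsum : ∀ᵐ ω ∂P, Z1 ω + Z2 ω + Z3 ω = 0 := by
    have := hZ 1 1 1
    norm_num at this
    have hm : Measurable (fun ω => Z1 ω + Z2 ω + Z3 ω) := by fun_prop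
    have h0 : ∀ᵐ x ∂(P.map (fun ω => Z1 ω + Z2 ω + Z3 ω)), x = 0 := by
      rw [this]
      exact (ae_dirac_iff (p := fun x : ℝ => x = 0) (measurableSet_singleton 0)).2 rfl
    exact ae_of_ae_map hm.aemeasurable h0
  obtain ⟨mW, eW, eW2, eW3⟩ := gauss_facts hWm hW
  obtain ⟨m1, e1, e12, e13⟩ := gauss_facts hZ1 l1
  obtain ⟨m2, -, -, -⟩ := gauss_facts hZ2 l2
  obtain ⟨m3, e3, e32, -⟩ := gauss_facts hZ3 l3
  obtain ⟨mD, eD, -, -⟩ := gauss_facts (by fun_prop : Measurable fun ω => Z1 ω - Z2 ω) lD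
  have hcube := abs_cube_gt (by fun_prop : Measurable fun ω => Z1 ω - Z2 ω) lD
  have m0 : MemLp (fun _ : Ω => (1 : ℝ)) 3 P := memLp_const 1
  -- symmetries
  have tr : ∀ {X Y Z : Ω → ℝ}, Measurable X → Measurable Y → Measurable Z →
      P.map (fun ω => (Z1 ω, Z2 ω, Z3 ω)) = P.map (fun ω => (X ω, Y ω, Z ω)) →
      ∀ G : ℝ × ℝ × ℝ → ℝ, Measurable G →
      ∫ ω, G (Z1 ω, Z2 ω, Z3 ω) ∂P = ∫ ω, G (X ω, Y ω, Z ω) ∂P := by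
    intro X Y Z hX hY hZ' hm G hG
    rw [← integral_map (φ := fun ω => (Z1 ω, Z2 ω, Z3 ω)) (f := G) (by fun_prop)
      hG.aestronglyMeasurable, hm, integral_map (by fun_prop) hG.aestronglyMeasurable]
  have s12 := tr hZ2 hZ1 hZ3 (triple_map_eq P hZ1 hZ2 hZ3 hZ2 hZ1 hZ3 (by
    intro a b c
    rw [hZ a b c, show (fun ω => a * Z2 ω + b * Z1 ω + c * Z3 ω)
      = fun ω => b * Z1 ω + a * Z2 ω + c * Z3 ω by ext; ring, hZ b a c]
    congr 2; ring))
  have s13 := tr hZ3 hZ2 hZ1 (triple_map_eq P hZ1 hZ2 hZ3 hZ3 hZ2 hZ1 (by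
    intro a b c
    rw [hZ a b c, show (fun ω => a * Z3 ω + b * Z2 ω + c * Z1 ω)
      = fun ω => c * Z1 ω + b * Z2 ω + a * Z3 ω by ext; ring, hZ c b a]
    congr 2; ring))
  have sn := tr hZ1.neg hZ2.neg hZ3.neg (triple_map_eq P hZ1 hZ2 hZ3 hZ1.neg hZ2.neg hZ3.neg (by
    intro a b c
    rw [hZ a b c, show (fun ω => a * (-Z1) ω + b * (-Z2) ω + c * (-Z3) ω)
      = fun ω => (-a) * Z1 ω + (-b) * Z2 ω + (-c) * Z3 ω by
        ext; simp only [Pi.neg_apply]; ring, hZ (-a) (-b) (-c)]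
    congr 2; ring))
  simp only [Pi.neg_apply] at sn
  -- the maximum
  obtain ⟨M, hM⟩ : ∃ M : Ω → ℝ, M = fun ω => max (Z1 ω) (max (Z2 ω) (Z3 ω)) := ⟨_, rfl⟩
  have hMω : ∀ ω, max (Z1 ω) (max (Z2 ω) (Z3 ω)) = M ω := fun ω => by rw [hM]
  have mM : MemLp M 3 P := by rw [hM]; exact m1.sup (m2.sup m3)
  have hMm : Measurable M := by rw [hM]; fun_prop
  have hA : ∀ ω, max 0 (max (Z2 ω - Z1 ω) (Z3 ω - Z1 ω)) = M ω - Z1 ω := by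
    intro ω
    rw [← hMω, max_sub_sub_right, ← sub_self (Z1 ω), max_sub_sub_right]
  -- D and Z3 are independent
  have hindD : IndepFun (fun ω => Z1 ω - Z2 ω) Z3 P := by
    apply HasGaussianLaw.indepFun_of_covariance_eq_zero
    · refine ⟨isGaussian_of_map_eq_gaussianReal fun L => ?_⟩
      refine ⟨0, _, Eq.trans ?_ (hZ (L (1, 0)) (-L (1, 0)) (L (0, 1)))⟩
      · rw [Measure.map_map (by fun_prop) (by fun_prop)]
        congr 1
        ext ω
        have : ((Z1 ω - Z2 ω, Z3 ω) : ℝ × ℝ)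
            = (Z1 ω - Z2 ω) • ((1, 0) : ℝ × ℝ) + Z3 ω • ((0, 1) : ℝ × ℝ) := by simp
        rw [Function.comp_apply, this, map_add, map_smul, map_smul]
        simp only [smul_eq_mul]
        ring
    · rw [covariance_eq_sub (mD.mono_exponent (by norm_num)) (m3.mono_exponent (by norm_num)),
        eD, zero_mul, sub_zero]
      have a := s12 (fun p => p.1 * p.2.2) (by fun_prop)
      have : ∀ ω, (Z1 ω - Z2 ω) * Z3 ω = Z1 ω * Z3 ω * 1 - Z2 ω * Z3 ω * 1 := fun ω => by ring
      simp only [Pi.mul_apply, this]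
      rw [integral_sub (integrable_mul3 m1 m3 m0) (integrable_mul3 m2 m3 m0)]
      simp only [mul_one]
      linarith
  -- cubic expansions
  have X1 : ∫ ω, (M ω - Z1 ω) ^ 3 ∂P = ∫ ω, M ω * M ω * M ω ∂P - 3 * ∫ ω, M ω * M ω * Z1 ω ∂P
      + 3 * ∫ ω, M ω * Z1 ω * Z1 ω ∂P := by
    have iA := integrable_mul3 mM mM mM
    have iB := integrable_mul3 mM mM m1
    have iC := integrable_mul3 mM m1 m1
    have iD := integrable_mul3 m1 m1 m1
    have : ∀ ω, (M ω - Z1 ω) ^ 3 = M ω * M ω * M ω - 3 * (M ω * M ω * Z1 ω)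
      + 3 * (M ω * Z1 ω * Z1 ω) - Z1 ω * Z1 ω * Z1 ω := fun ω => by ring
    simp only [this]
    rw [integral_sub (int_add (int_sub iA (iB.const_mul _)) (iC.const_mul _)) iD,
      integral_add (int_sub iA (iB.const_mul _)) (iC.const_mul _), integral_sub iA (iB.const_mul _),
      integral_const_mul, integral_const_mul]
    have : ∫ ω, Z1 ω * Z1 ω * Z1 ω ∂P = 0 := by
      rw [← e13]; congr 1; ext ω; ring
    rw [this]; ring
  have X2 : ∫ ω, (W ω + M ω) ^ 3 ∂P = ∫ ω, M ω * M ω * M ω ∂P + 6 * ∫ ω, M ω ∂P := by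
    have iA := integrable_mul3 mM mM mM
    have iB := integrable_mul3 mW mM mM
    have iC := integrable_mul3 mW mW mM
    have iD := integrable_mul3 mW mW mW
    have : ∀ ω, (W ω + M ω) ^ 3 = M ω * M ω * M ω + 3 * (W ω * M ω * M ω)
      + 3 * (W ω * W ω * M ω) + W ω * W ω * W ω := fun ω => by ring
    simp only [this]
    rw [integral_add (int_add (int_add iA (iB.const_mul _)) (iC.const_mul _)) iD,
      integral_add (int_add iA (iB.const_mul _)) (iC.const_mul _), integral_add iA (iB.const_mul _),
      integral_const_mul, integral_const_mul]
    have c3 : ∫ ω, W ω * W ω * W ω ∂P = 0 := by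
      rw [← eW3]; congr 1; ext ω; ring
    have c2 : ∫ ω, W ω * W ω * M ω ∂P = 2 * ∫ ω, M ω ∂P := by
      have := hindep.integral_fun_comp_mul_comp (f := fun x : ℝ => x ^ 2)
        (g := fun p : ℝ × ℝ × ℝ => max p.1 (max p.2.1 p.2.2)) (by fun_prop) (by fun_prop)
        (by fun_prop) (Measurable.aestronglyMeasurable (by fun_prop))
      simp only [hMω, eW2] at this
      simpa [pow_two] using this
    have c1 : ∫ ω, W ω * M ω * M ω ∂P = 0 := by
      have := hindep.integral_fun_comp_mul_comp (f := fun x : ℝ => x)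
        (g := fun p : ℝ × ℝ × ℝ => (max p.1 (max p.2.1 p.2.2)) ^ 2) (by fun_prop) (by fun_prop)
        (by fun_prop) (Measurable.aestronglyMeasurable (by fun_prop))
      simp only [hMω, eW, zero_mul] at this
      rw [← this]; congr 1; ext ω; ring
    rw [c1, c2, c3]; ring
  -- exchangeability
  have Mx12 : ∀ ω, max (Z2 ω) (max (Z1 ω) (Z3 ω)) = M ω := fun ω => by
    rw [← hMω, max_left_comm]
  have Mx13 : ∀ ω, max (Z3 ω) (max (Z2 ω) (Z1 ω)) = M ω := fun ω => by
    rw [← hMω, max_comm, max_comm (Z2 ω) (Z1 ω), max_assoc]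
  have X3 : ∫ ω, M ω * M ω * Z1 ω ∂P = 0 := by
    have a := s12 (fun p => (max p.1 (max p.2.1 p.2.2)) * (max p.1 (max p.2.1 p.2.2)) * p.1)
      (by fun_prop)
    have b := s13 (fun p => (max p.1 (max p.2.1 p.2.2)) * (max p.1 (max p.2.1 p.2.2)) * p.1)
      (by fun_prop)
    simp only [hMω, Mx12, Mx13] at a b
    have c : ∫ ω, (M ω * M ω * Z1 ω + M ω * M ω * Z2 ω + M ω * M ω * Z3 ω) ∂P = 0 := by
      rw [← integral_zero Ω ℝ (μ := P)]
      apply integral_congr_ae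
      filter_upwards [hsum] with ω hω
      rw [← mul_add, ← mul_add, hω, mul_zero]
    rw [integral_add (int_add (integrable_mul3 mM mM m1) (integrable_mul3 mM mM m2))
      (integrable_mul3 mM mM m3), integral_add (integrable_mul3 mM mM m1)
      (integrable_mul3 mM mM m2)] at c
    linarith
  -- `R² = Z1² + Z2² + Z3²`
  have X4 : 3 * ∫ ω, M ω * Z1 ω * Z1 ω ∂P - 6 * ∫ ω, M ω ∂P
      = ∫ ω, M ω * (Z1 ω ^ 2 + Z2 ω ^ 2 + Z3 ω ^ 2 - 6) ∂P := by
    have a := s12 (fun p => (max p.1 (max p.2.1 p.2.2)) * p.1 * p.1) (by fun_prop)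
    have b := s13 (fun p => (max p.1 (max p.2.1 p.2.2)) * p.1 * p.1) (by fun_prop)
    simp only [hMω, Mx12, Mx13] at a b
    have : ∀ ω, M ω * (Z1 ω ^ 2 + Z2 ω ^ 2 + Z3 ω ^ 2 - 6) = M ω * Z1 ω * Z1 ω
      + M ω * Z2 ω * Z2 ω + M ω * Z3 ω * Z3 ω - 6 * M ω := fun ω => by ring
    simp only [this]
    rw [integral_sub (int_add (int_add (integrable_mul3 mM m1 m1) (integrable_mul3 mM m2 m2))
      (integrable_mul3 mM m3 m3)) ((mM.integrable (by norm_num)).const_mul _),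
      integral_add (int_add (integrable_mul3 mM m1 m1) (integrable_mul3 mM m2 m2))
      (integrable_mul3 mM m3 m3), integral_add (integrable_mul3 mM m1 m1)
      (integrable_mul3 mM m2 m2), integral_const_mul]
    linarith
  have iR : ∀ {f : Ω → ℝ}, MemLp f 3 P →
      Integrable (fun ω => f ω * (Z1 ω ^ 2 + Z2 ω ^ 2 + Z3 ω ^ 2 - 6)) P := by
    intro f hf
    have : ∀ ω, f ω * (Z1 ω ^ 2 + Z2 ω ^ 2 + Z3 ω ^ 2 - 6) = f ω * Z1 ω * Z1 ω
      + f ω * Z2 ω * Z2 ω + f ω * Z3 ω * Z3 ω - 6 * f ω := fun ω => by ring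
    simp only [this]
    exact (((integrable_mul3 hf m1 m1).add (integrable_mul3 hf m2 m2)).add
      (integrable_mul3 hf m3 m3)).sub ((hf.integrable (by norm_num)).const_mul _)
  have X5 : 4 * ∫ ω, M ω * (Z1 ω ^ 2 + Z2 ω ^ 2 + Z3 ω ^ 2 - 6) ∂P
      = 3 * ∫ ω, |Z1 ω - Z2 ω| * (Z1 ω ^ 2 + Z2 ω ^ 2 + Z3 ω ^ 2 - 6) ∂P := by
    have a := sn (fun p => (max p.1 (max p.2.1 p.2.2)) * (p.1 ^ 2 + p.2.1 ^ 2 + p.2.2 ^ 2 - 6))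
      (by fun_prop)
    have b := s13 (fun p => |p.1 - p.2.1| * (p.1 ^ 2 + p.2.1 ^ 2 + p.2.2 ^ 2 - 6)) (by fun_prop)
    have c := s12 (fun p => |p.2.2 - p.2.1| * (p.1 ^ 2 + p.2.1 ^ 2 + p.2.2 ^ 2 - 6)) (by fun_prop)
    simp only [hMω, neg_sq] at a b c
    have r1 : ∀ ω, Z3 ω ^ 2 + Z2 ω ^ 2 + Z1 ω ^ 2 - 6 = Z1 ω ^ 2 + Z2 ω ^ 2 + Z3 ω ^ 2 - 6 :=
      fun ω => by ring
    have r2 : ∀ ω, Z2 ω ^ 2 + Z1 ω ^ 2 + Z3 ω ^ 2 - 6 = Z1 ω ^ 2 + Z2 ω ^ 2 + Z3 ω ^ 2 - 6 :=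
      fun ω => by ring
    simp only [r1] at b
    simp only [r2] at c
    have mN : MemLp (fun ω => max (-Z1 ω) (max (-Z2 ω) (-Z3 ω))) 3 P :=
      m1.neg.sup (m2.neg.sup m3.neg)
    have key := max_range_eq
    have i12 := iR (f := fun ω => |Z1 ω - Z2 ω|) mD.abs
    have i32 := iR (f := fun ω => |Z3 ω - Z2 ω|) (m3.sub m2).abs
    have i31 := iR (f := fun ω => |Z3 ω - Z1 ω|) (m3.sub m1).abs
    have d : ∫ ω, 2 * (M ω * (Z1 ω ^ 2 + Z2 ω ^ 2 + Z3 ω ^ 2 - 6)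
        + max (-Z1 ω) (max (-Z2 ω) (-Z3 ω)) * (Z1 ω ^ 2 + Z2 ω ^ 2 + Z3 ω ^ 2 - 6)) ∂P
        = ∫ ω, (|Z1 ω - Z2 ω| * (Z1 ω ^ 2 + Z2 ω ^ 2 + Z3 ω ^ 2 - 6)
          + |Z3 ω - Z2 ω| * (Z1 ω ^ 2 + Z2 ω ^ 2 + Z3 ω ^ 2 - 6)
          + |Z3 ω - Z1 ω| * (Z1 ω ^ 2 + Z2 ω ^ 2 + Z3 ω ^ 2 - 6)) ∂P := by
      congr 1; ext ω
      rw [← add_mul, ← add_mul, ← add_mul, ← key, hMω]; ring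
    rw [integral_const_mul, integral_add (iR mM) (iR mN), integral_add (int_add i12 i32) i31,
      integral_add i12 i32] at d
    linarith
  have X6 : ∫ ω, |Z1 ω - Z2 ω| * (Z1 ω ^ 2 + Z2 ω ^ 2 + Z3 ω ^ 2 - 6) ∂P
      = (1 / 2) * ∫ ω, |Z1 ω - Z2 ω| ^ 3 ∂P - 3 * ∫ ω, |Z1 ω - Z2 ω| ∂P := by
    have a := hindD.integral_fun_comp_mul_comp (f := fun x : ℝ => |x|)
        (g := fun x : ℝ => x ^ 2) (by fun_prop) (by fun_prop)
        (by fun_prop) (by fun_prop)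
    rw [e32] at a
    have i3 : Integrable (fun ω => |Z1 ω - Z2 ω| ^ 3) P := by
      simpa using mD.integrable_norm_pow (by norm_num)
    have i1 : Integrable (fun ω => |Z1 ω - Z2 ω|) P := (mD.integrable (by norm_num)).abs
    have i2 : Integrable (fun ω => |Z1 ω - Z2 ω| * Z3 ω ^ 2) P := by
      simpa [pow_two, mul_assoc] using integrable_mul3 mD.abs m3 m3
    have : ∫ ω, |Z1 ω - Z2 ω| * (Z1 ω ^ 2 + Z2 ω ^ 2 + Z3 ω ^ 2 - 6) ∂P
        = ∫ ω, ((1 / 2) * |Z1 ω - Z2 ω| ^ 3 + (3 / 2) * (|Z1 ω - Z2 ω| * Z3 ω ^ 2)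
          - 6 * |Z1 ω - Z2 ω|) ∂P := by
      apply integral_congr_ae
      filter_upwards [hsum] with ω hω
      have h3 : Z3 ω = - Z1 ω - Z2 ω := by linarith
      have h4 : |Z1 ω - Z2 ω| ^ 3 = |Z1 ω - Z2 ω| * (Z1 ω - Z2 ω) ^ 2 := by
        rw [← sq_abs (Z1 ω - Z2 ω)]; ring
      rw [h4, h3]; ring
    rw [this, integral_sub (int_add (i3.const_mul _) (i2.const_mul _)) (i1.const_mul _),
      integral_add (i3.const_mul _) (i2.const_mul _), integral_const_mul, integral_const_mul,
      integral_const_mul, a]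
    norm_num; ring
  simp only [hA, hMω]
  linarith
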